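/- arXiv:2509.00556 — 2 statements merged into one kernel-verified Lean document; each statement's English description precedes it below -/
import Mathlib

section
/- Let S, T ⊆ 𝔽₂ⁿ be sets with |S| = |T| = k and dim(S) = dim(T) = k − 3 (so dim E(S) = dim E(T) = 2). Fix bases X₁, X₂ of E(S) and Y₁, Y₂ of E(T). Then S and T are affinely equivalent if and only if the multiset of cardinalities {|v_X(a)| : a ∈ 𝔽₂²} equals the multiset {|v_Y(a)| : a ∈ 𝔽₂²} and moreover |v_X(0)| = |v_Y(0)| (S and T have the same number of isolated points). -/
open scoped symmDiff

/-- `zSet X a` is the symmetric difference of the sets `X i` over the indices `i` with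
`a i = 1` (with `zSet X 0 = ∅`). -/
def zSet {α : Type*} [DecidableEq α] {r : ℕ} (X : Fin r → Finset α)
    (a : Fin r → ZMod 2) : Finset α :=
  (Finset.univ.filter (fun i => a i = 1)).fold (· ∆ ·) ∅ X

/-- The Venn region of `S` with respect to `X₁, …, X_r` determined by `a ∈ 𝔽₂^r`. -/
def vennRegion {α : Type*} [DecidableEq α] {r : ℕ} (S : Finset α)
    (X : Fin r → Finset α) (a : Fin r → ZMod 2) : Finset α :=
  S.filter (fun x => ∀ i, x ∈ X i ↔ a i = 1)

/-- `E(S)`: the collection of all even zero-sum subsets of `S ⊆ 𝔽₂ⁿ`. -/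
def evenZeroSums {n : ℕ} (S : Finset (Fin n → ZMod 2)) :
    Set (Finset (Fin n → ZMod 2)) :=
  {X | X ⊆ S ∧ Even X.card ∧ (∑ x ∈ X, x) = 0}

/-- The dimension of a subset `S ⊆ 𝔽₂ⁿ`: the dimension of its affine span. -/
noncomputable def affDim {n : ℕ} (S : Finset (Fin n → ZMod 2)) : ℕ :=
  Module.finrank (ZMod 2) (affineSpan (ZMod 2) (S : Set (Fin n → ZMod 2))).direction

/-!
Label each `x ∈ S` by the vector in `𝔽₂^r` recording which of the `X i` contain `x`, so that the
Venn regions are the fibres of the labelling. Identify subsets of `S` with their indicators in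
`𝔽₂^S`. Then `E(S)` is the space of affine relations among the points of `S`, and if `X` spans
`E(S)` it is also the space of all `x ↦ φ(label x)` with `φ` a linear functional on `𝔽₂^r`.

Affine relations determine a family of points up to affine equivalence, and the space of
functional values determines the family of labels up to a linear automorphism of `𝔽₂^r` (this is
the uniqueness of the Gale dual). Hence a bijection `S ≃ T` extends to an affine automorphism of
`𝔽₂ⁿ` if and only if it carries labels to labels along some `M ∈ GL_r(𝔽₂)`; a bijection of the
latter kind exists if and only if `M` matches the sizes of the Venn regions. For `r = 2`, every
permutation of `𝔽₂²` fixing `0` is linear, so only the multiset of sizes and the size at `0`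
matter.
-/

section Fibers

variable {α β γ : Type*} [Fintype α] [Fintype β] {f : α → γ} {g : β → γ}

lemma exists_equiv_iff_forall_card_fiber_eq [DecidableEq γ] :
    (∃ e : α ≃ β, ∀ a, g (e a) = f a) ↔
      ∀ c, Fintype.card {a // f a = c} = Fintype.card {b // g b = c} := by
  constructor
  · rintro ⟨e, he⟩ c
    exact Fintype.card_congr (e.subtypeEquiv fun a => by rw [he])
  · intro h
    exact ⟨Equiv.ofFiberEquiv fun c => Fintype.equivOfCardEq (h c), Equiv.ofFiberEquiv_map _⟩

lemma exists_equiv_iff_map_univ_eq :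
    (∃ e : α ≃ β, ∀ a, g (e a) = f a) ↔
      (Finset.univ : Finset α).val.map f = (Finset.univ : Finset β).val.map g := by
  classical
  rw [exists_equiv_iff_forall_card_fiber_eq, Multiset.ext]
  refine forall_congr' fun c => ?_
  simp only [Multiset.count_map, Fintype.card_subtype, eq_comm (a := c)]
  rfl

lemma exists_equiv_apply_eq_iff_map_univ_eq {a₀ : α} {b₀ : β} :
    (∃ e : α ≃ β, e a₀ = b₀ ∧ ∀ a, g (e a) = f a) ↔
      (Finset.univ : Finset α).val.map f = (Finset.univ : Finset β).val.map g ∧ f a₀ = g b₀ := by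
  classical
  rw [← exists_equiv_iff_map_univ_eq]
  constructor
  · rintro ⟨e, rfl, he⟩
    exact ⟨⟨e, he⟩, (he a₀).symm⟩
  · rintro ⟨⟨e, he⟩, h₀⟩
    refine ⟨e.setValue a₀ b₀, e.setValue_eq a₀ b₀, fun a => ?_⟩
    have hswap : f (Equiv.swap a₀ (e.symm b₀) a) = f a := by
      have : f (e.symm b₀) = f a₀ := by rw [h₀, ← he, e.apply_symm_apply]
      rw [Equiv.swap_apply_def]
      split_ifs <;> simp_all only
    exact (he _).trans hswap

end Fibers

lemma image_eq_iff_exists_equiv {α β : Type*} [DecidableEq β] {f : α → β}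
    (hf : Function.Injective f) {S : Finset α} {T : Finset β} :
    S.image f = T ↔ ∃ e : S ≃ T, ∀ x : S, f x = e x := by
  constructor
  · rintro rfl
    refine ⟨Equiv.ofBijective (fun x => ⟨f x, Finset.mem_image_of_mem f x.2⟩) ⟨?_, ?_⟩,
      fun _ => rfl⟩
    · exact fun x y h => Subtype.ext (hf (congrArg Subtype.val h))
    · rintro ⟨_, hy⟩
      obtain ⟨x, hx, rfl⟩ := Finset.mem_image.1 hy
      exact ⟨⟨x, hx⟩, rfl⟩
  · rintro ⟨e, he⟩
    ext y
    rw [Finset.mem_image]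
    constructor
    · rintro ⟨x, hx, rfl⟩
      exact he ⟨x, hx⟩ ▸ (e ⟨x, hx⟩).2
    · intro hy
      exact ⟨e.symm ⟨y, hy⟩, (e.symm ⟨y, hy⟩).2, by rw [he, e.apply_symm_apply]⟩

section Relations

variable {ι K V : Type*} [Field K] [AddCommGroup V] [Module K V]

variable (K) in
/-- The space of all families `i ↦ φ (v i)` with `φ` a linear functional; in coordinates, the column
space of the matrix whose rows are the vectors `v i`. -/
def functionalValues (v : ι → V) : Submodule K (ι → K) :=
  LinearMap.range (LinearMap.pi fun i => Module.Dual.eval K V (v i))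

lemma mem_functionalValues {v : ι → V} {w : ι → K} :
    w ∈ functionalValues K v ↔ ∃ φ : Module.Dual K V, ∀ i, φ (v i) = w i := by
  simp [functionalValues, funext_iff]

section Fintype

variable [Fintype ι]

variable (K) in
/-- The space of affine relations of a family of points: the weights of total weight zero whose
weighted sum of points vanishes. For the points of a set `S ⊆ 𝔽₂ⁿ` these are the indicators of the
members of `E(S)`. -/
def affineRelations (p : ι → V) : Submodule K (ι → K) :=
  LinearMap.ker (Fintype.linearCombination K fun _ : ι => (1 : K)) ⊓
    LinearMap.ker (Fintype.linearCombination K p)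

lemma mem_affineRelations {p : ι → V} {w : ι → K} :
    w ∈ affineRelations K p ↔ ∑ i, w i = 0 ∧ ∑ i, w i • p i = 0 := by
  simp [affineRelations, Fintype.linearCombination_apply]

lemma sum_smul_sub_eq_zero_iff_mem_affineRelations [DecidableEq ι] {p : ι → V} {w : ι → K}
    (i₀ : ι) :
    ∑ i, w i • (p i - p i₀) = 0 ↔ w - Pi.single i₀ (∑ i, w i) ∈ affineRelations K p := by
  simp [mem_affineRelations, smul_sub, sub_smul, Finset.sum_sub_distrib, ← Finset.sum_smul,
    Pi.single_apply, ite_smul]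

lemma sum_smul_eq_zero_iff_forall_mem_functionalValues {v : ι → V} {w : ι → K} :
    ∑ i, w i • v i = 0 ↔ ∀ z ∈ functionalValues K v, ∑ i, w i * z i = 0 := by
  rw [← Module.forall_dual_apply_eq_zero_iff K]
  constructor
  · intro h z hz
    obtain ⟨φ, hφ⟩ := mem_functionalValues.1 hz
    simpa only [map_sum, map_smul, smul_eq_mul, hφ] using h φ
  · intro h φ
    simpa only [map_sum, map_smul, smul_eq_mul] using
      h (fun i => φ (v i)) (mem_functionalValues.2 ⟨φ, fun _ => rfl⟩)

lemma exists_linearEquiv_apply_eq_of_ker_eq {M : Type*} [AddCommGroup M] [Module K M]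
    [FiniteDimensional K V] {f g : M →ₗ[K] V} (h : LinearMap.ker f = LinearMap.ker g) :
    ∃ L : V ≃ₗ[K] V, ∀ m, L (f m) = g m := by
  obtain ⟨L, hL⟩ := Submodule.exists_linearEquiv_restrict_eq
    (f.quotKerEquivRange.symm ≪≫ₗ Submodule.quotEquivOfEq _ _ h ≪≫ₗ g.quotKerEquivRange)
  refine ⟨L, fun m => ?_⟩
  simpa using (hL (f.quotKerEquivRange (Submodule.Quotient.mk m))).symm

lemma exists_linearEquiv_iff_sum_smul_eq_zero_iff [FiniteDimensional K V] {u v : ι → V} :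
    (∃ L : V ≃ₗ[K] V, ∀ i, L (u i) = v i) ↔
      ∀ w : ι → K, ∑ i, w i • u i = 0 ↔ ∑ i, w i • v i = 0 := by
  classical
  constructor
  · rintro ⟨L, hL⟩ w
    simp only [← hL, ← map_smul, ← map_sum, LinearEquiv.map_eq_zero_iff]
  · intro h
    have hker : LinearMap.ker (Fintype.linearCombination K u) =
        LinearMap.ker (Fintype.linearCombination K v) := by
      ext w
      simpa only [LinearMap.mem_ker, Fintype.linearCombination_apply] using h w
    obtain ⟨L, hL⟩ := exists_linearEquiv_apply_eq_of_ker_eq hker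
    refine ⟨L, fun i => ?_⟩
    simpa only [Fintype.linearCombination_apply_single, one_smul] using hL (Pi.single i 1)

lemma exists_affine_iff_affineRelations_eq [FiniteDimensional K V] {p q : ι → V} :
    (∃ (L : V ≃ₗ[K] V) (c : V), ∀ i, L (p i) + c = q i) ↔
      affineRelations K p = affineRelations K q := by
  classical
  constructor
  · rintro ⟨L, c, h⟩
    ext w
    rw [mem_affineRelations, mem_affineRelations]
    refine and_congr_right fun hw => ?_
    have hsum : ∑ i, w i • q i = L (∑ i, w i • p i) := by
      simp only [← h, smul_add, Finset.sum_add_distrib, ← Finset.sum_smul, hw, zero_smul, add_zero,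
        map_sum, map_smul]
    rw [hsum, LinearEquiv.map_eq_zero_iff]
  · intro h
    rcases isEmpty_or_nonempty ι with _ | ⟨⟨i₀⟩⟩
    · exact ⟨LinearEquiv.refl K V, 0, isEmptyElim⟩
    obtain ⟨L, hL⟩ : ∃ L : V ≃ₗ[K] V, ∀ i, L (p i - p i₀) = q i - q i₀ := by
      simp only [exists_linearEquiv_iff_sum_smul_eq_zero_iff,
        sum_smul_sub_eq_zero_iff_mem_affineRelations, h, implies_true]
    refine ⟨L, q i₀ - L (p i₀), fun i => ?_⟩
    rw [← sub_add_cancel (q i) (q i₀), ← hL, map_sub]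
    abel

end Fintype

lemma exists_linearEquiv_iff_functionalValues_eq [Finite ι] [FiniteDimensional K V]
    {u v : ι → V} :
    (∃ L : V ≃ₗ[K] V, ∀ i, L (u i) = v i) ↔ functionalValues K u = functionalValues K v := by
  constructor
  · rintro ⟨L, hL⟩
    ext w
    rw [mem_functionalValues, mem_functionalValues, L.dualMap.surjective.exists]
    simp only [LinearEquiv.dualMap_apply, hL]
  · intro h
    cases nonempty_fintype ι
    simp only [exists_linearEquiv_iff_sum_smul_eq_zero_iff,
      sum_smul_eq_zero_iff_forall_mem_functionalValues, h, implies_true]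

end Relations

section Labels

variable {α ι : Type*} [DecidableEq α]

/-- The vector recording which of the sets `X i` contain `x`; its fibres on `S` are the Venn regions
of `S`. -/
def regionLabel (X : ι → Finset α) (x : α) : ι → ZMod 2 :=
  fun i => if x ∈ X i then 1 else 0

lemma mem_fold_symmDiff (X : ι → Finset α) (s : Finset ι) (x : α) :
    x ∈ s.fold (fun A B : Finset α => A ∆ B) ∅ X ↔ ∑ i ∈ s, regionLabel X x i = 1 := by
  classical
  induction s using Finset.induction_on with
  | empty => simp
  | insert i s hi ih =>
    have one_add_eq_one_iff : ∀ t : ZMod 2, 1 + t = 1 ↔ ¬t = 1 := by decide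
    rw [Finset.fold_insert hi, Finset.sum_insert hi, Finset.mem_symmDiff, ih]
    by_cases hx : x ∈ X i <;> simp [regionLabel, hx, one_add_eq_one_iff]

variable {r : ℕ} (S : Finset α) (X : Fin r → Finset α)

lemma mem_zSet (b : Fin r → ZMod 2) (x : α) : x ∈ zSet X b ↔ b ⬝ᵥ regionLabel X x = 1 := by
  have ite_eq_mul : ∀ s t : ZMod 2, (if s = 1 then t else 0) = s * t := by decide
  simp only [zSet, mem_fold_symmDiff, Finset.sum_filter, dotProduct, ite_eq_mul]

lemma mem_vennRegion (a : Fin r → ZMod 2) (x : α) :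
    x ∈ vennRegion S X a ↔ x ∈ S ∧ regionLabel X x = a := by
  have ite_one_zero_eq_iff : ∀ (P : Prop) [Decidable P] (t : ZMod 2),
      (if P then 1 else 0) = t ↔ (P ↔ t = 1) := by
    intro P _ t
    by_cases hP : P <;> simp only [hP, if_true, if_false] <;> revert t <;> decide
  simp only [vennRegion, Finset.mem_filter, funext_iff, regionLabel, ite_one_zero_eq_iff]

lemma card_vennRegion (a : Fin r → ZMod 2) :
    (vennRegion S X a).card = Fintype.card {x : S // regionLabel X x.1 = a} := by
  rw [← Fintype.card_coe]
  exact Fintype.card_congr <| (Equiv.subtypeEquivRight (mem_vennRegion S X a)).trans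
    (Equiv.subtypeSubtypeEquivSubtypeInter _ _).symm

end Labels

section WeightSupport

variable {α : Type*} {S : Finset α}

/-- The subset of `S` whose indicator is the weight `w`. -/
def weightSupport (w : S → ZMod 2) : Finset α :=
  (Finset.univ.filter (w · = 1)).map (Function.Embedding.subtype _)

lemma weightSupport_subset (w : S → ZMod 2) : weightSupport w ⊆ S :=
  Finset.map_subtype_subset _

lemma coe_mem_weightSupport {w : S → ZMod 2} {x : S} : x.1 ∈ weightSupport w ↔ w x = 1 := by
  simp [weightSupport]

lemma sum_smul_eq_sum_weightSupport {M : Type*} [AddCommMonoid M] [Module (ZMod 2) M]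
    (w : S → ZMod 2) (f : α → M) : ∑ x : S, w x • f x = ∑ x ∈ weightSupport w, f x := by
  have smul_eq_ite : ∀ (t : ZMod 2) (m : M), t • m = if t = 1 then m else 0 := by
    intro t m
    obtain rfl | rfl : t = 0 ∨ t = 1 := by decide +revert
    · simp
    · simp
  simp [weightSupport, Finset.sum_filter, smul_eq_ite]

lemma eq_weightSupport_iff_of_subset {w : S → ZMod 2} {U : Finset α} (hU : U ⊆ S) :
    U = weightSupport w ↔ ∀ x : S, x.1 ∈ U ↔ w x = 1 := by
  simp only [← coe_mem_weightSupport]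
  refine ⟨fun h x => by rw [h], fun h => Finset.ext fun x => ?_⟩
  by_cases hx : x ∈ S
  · exact h ⟨x, hx⟩
  · exact iff_of_false (hx <| hU ·) (hx <| weightSupport_subset w ·)

end WeightSupport

section EvenZeroSums

variable {n r : ℕ} {S T : Finset (Fin n → ZMod 2)} {X Y : Fin r → Finset (Fin n → ZMod 2)}

lemma weightSupport_mem_evenZeroSums_iff {w : S → ZMod 2} :
    weightSupport w ∈ evenZeroSums S ↔ w ∈ affineRelations (ZMod 2) ((↑) : S → Fin n → ZMod 2) := by
  have card_eq : ((weightSupport w).card : ZMod 2) = ∑ x, w x := by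
    simpa using (sum_smul_eq_sum_weightSupport w fun _ => (1 : ZMod 2)).symm
  simp only [evenZeroSums, Set.mem_ofPred_eq, weightSupport_subset, true_and, mem_affineRelations,
    ← ZMod.natCast_eq_zero_iff_even, card_eq, sum_smul_eq_sum_weightSupport w fun x => x]

lemma affineRelations_eq_functionalValues (hX : Set.range (zSet X) = evenZeroSums S) :
    affineRelations (ZMod 2) ((↑) : S → Fin n → ZMod 2) =
      functionalValues (ZMod 2) fun x : S => regionLabel X x.1 := by
  have eq_one_iff_eq_one : ∀ s t : ZMod 2, (s = 1 ↔ t = 1) ↔ s = t := by decide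
  have zSet_subset (b) : zSet X b ⊆ S := (hX.subset (Set.mem_range_self b)).1
  ext w
  rw [← weightSupport_mem_evenZeroSums_iff, ← hX, mem_functionalValues,
    (dotProductEquiv (ZMod 2) (Fin r)).surjective.exists, Set.mem_range]
  simp only [eq_weightSupport_iff_of_subset (zSet_subset _), mem_zSet, eq_one_iff_eq_one,
    dotProductEquiv_apply_apply]

lemma affineRelations_comp_eq_functionalValues_comp {κ : Type*} [Fintype κ]
    (hX : Set.range (zSet X) = evenZeroSums S) (e : κ ≃ S) :
    affineRelations (ZMod 2) (fun i => (e i).1) =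
      functionalValues (ZMod 2) fun i => regionLabel X (e i).1 := by
  ext w
  have h := SetLike.ext_iff.1 (affineRelations_eq_functionalValues hX) (w ∘ e.symm)
  rw [mem_affineRelations, mem_functionalValues, ← e.sum_comp, ← e.sum_comp] at h
  simpa only [mem_affineRelations, mem_functionalValues, e.surjective.forall, Function.comp_apply,
    e.symm_apply_apply] using h

theorem exists_affine_image_eq_iff_exists_linearEquiv_card_vennRegion
    (hX : Set.range (zSet X) = evenZeroSums S) (hY : Set.range (zSet Y) = evenZeroSums T) :
    (∃ (L : (Fin n → ZMod 2) ≃ₗ[ZMod 2] (Fin n → ZMod 2)) (c : Fin n → ZMod 2),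
        S.image (fun x => L x + c) = T) ↔
      ∃ M : (Fin r → ZMod 2) ≃ₗ[ZMod 2] (Fin r → ZMod 2),
        ∀ a, (vennRegion T Y (M a)).card = (vennRegion S X a).card := by
  have affine_injective (L : (Fin n → ZMod 2) ≃ₗ[ZMod 2] (Fin n → ZMod 2)) (c : Fin n → ZMod 2) :
      Function.Injective fun x => L x + c := (add_left_injective c).comp L.injective
  calc
    _ ↔ ∃ e : S ≃ T, ∃ (L : (Fin n → ZMod 2) ≃ₗ[ZMod 2] (Fin n → ZMod 2)) (c : Fin n → ZMod 2),
          ∀ x : S, L x + c = e x := by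
      simp only [image_eq_iff_exists_equiv (affine_injective _ _)]
      exact ⟨fun ⟨L, c, e, h⟩ => ⟨e, L, c, h⟩, fun ⟨e, L, c, h⟩ => ⟨L, c, e, h⟩⟩
    _ ↔ ∃ e : S ≃ T, ∃ M : (Fin r → ZMod 2) ≃ₗ[ZMod 2] (Fin r → ZMod 2),
          ∀ x : S, M (regionLabel X x.1) = regionLabel Y (e x).1 := by
      simp only [exists_affine_iff_affineRelations_eq, exists_linearEquiv_iff_functionalValues_eq,
        affineRelations_eq_functionalValues hX, affineRelations_comp_eq_functionalValues_comp hY]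
    _ ↔ ∃ M : (Fin r → ZMod 2) ≃ₗ[ZMod 2] (Fin r → ZMod 2), ∃ e : S ≃ T,
          ∀ x : S, regionLabel Y (e x).1 = M (regionLabel X x.1) := by
      rw [exists_comm]
      simp only [eq_comm]
    _ ↔ _ := by
      refine exists_congr fun M => ?_
      rw [exists_equiv_iff_forall_card_fiber_eq (f := fun x : S => M (regionLabel X x.1))
        (g := fun y : T => regionLabel Y y.1), M.surjective.forall]
      simp only [EmbeddingLike.apply_eq_iff_eq, card_vennRegion, eq_comm]

end EvenZeroSums

section KleinFour

instance isAddKleinFour_fin_two_zmod_two : IsAddKleinFour (Fin 2 → ZMod 2) where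
  card_four := by simp
  exponent_two := by
    simp only [AddMonoid.exponent_pi, ZMod.exponent]
    decide

lemma exists_linearEquiv_iff_map_univ_eq {V W γ : Type*} [AddCommGroup V] [AddCommGroup W]
    [Module (ZMod 2) V] [Module (ZMod 2) W] [IsAddKleinFour V] [IsAddKleinFour W]
    [Fintype V] [Fintype W] {f : V → γ} {g : W → γ} :
    (∃ M : V ≃ₗ[ZMod 2] W, ∀ a, g (M a) = f a) ↔
      (Finset.univ : Finset V).val.map f = (Finset.univ : Finset W).val.map g ∧ f 0 = g 0 := by
  rw [← exists_equiv_apply_eq_iff_map_univ_eq]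
  constructor
  · rintro ⟨M, hM⟩
    exact ⟨M.toEquiv, M.map_zero, hM⟩
  · rintro ⟨e, he₀, he⟩
    exact ⟨(IsAddKleinFour.addEquiv e he₀).toLinearEquiv (ZMod.map_smul _), he⟩

end KleinFour

theorem stmt_17_general {n : ℕ} {S T : Finset (Fin n → ZMod 2)}
    {X Y : Fin 2 → Finset (Fin n → ZMod 2)}
    (hX : Set.range (zSet X) = evenZeroSums S) (hY : Set.range (zSet Y) = evenZeroSums T) :
    (∃ (L : (Fin n → ZMod 2) ≃ₗ[ZMod 2] (Fin n → ZMod 2)) (c : Fin n → ZMod 2),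
        S.image (fun x => L x + c) = T) ↔
      ((Finset.univ : Finset (Fin 2 → ZMod 2)).val.map
          (fun a => (vennRegion S X a).card) =
        (Finset.univ : Finset (Fin 2 → ZMod 2)).val.map
          (fun a => (vennRegion T Y a).card)) ∧
      (vennRegion S X 0).card = (vennRegion T Y 0).card :=
  (exists_affine_image_eq_iff_exists_linearEquiv_card_vennRegion hX hY).trans
    (exists_linearEquiv_iff_map_univ_eq (g := fun a => (vennRegion T Y a).card))

/-- Let `S, T ⊆ 𝔽₂ⁿ` with `|S| = |T| = k` and `dim S = dim T = k − 3`, and fix bases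
`X₁, X₂` of `E(S)` and `Y₁, Y₂` of `E(T)`.  Then `S` and `T` are affinely equivalent if
and only if the multiset of Venn region cardinalities `{|v_X(a)| : a ∈ 𝔽₂²}` equals the
multiset `{|v_Y(a)| : a ∈ 𝔽₂²}` and moreover `|v_X(0)| = |v_Y(0)|` (`S` and `T` have the
same number of isolated points). -/
theorem stmt_17 (n k : ℕ) (S T : Finset (Fin n → ZMod 2))
    (hSk : S.card = k) (hTk : T.card = k)
    (hSd : affDim S = k - 3) (hTd : affDim T = k - 3)
    (X Y : Fin 2 → Finset (Fin n → ZMod 2))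
    (hX : Set.range (zSet X) = evenZeroSums S ∧ Function.Injective (zSet X))
    (hY : Set.range (zSet Y) = evenZeroSums T ∧ Function.Injective (zSet Y)) :
    (∃ (L : (Fin n → ZMod 2) ≃ₗ[ZMod 2] (Fin n → ZMod 2)) (c : Fin n → ZMod 2),
        S.image (fun x => L x + c) = T) ↔
      ((Finset.univ : Finset (Fin 2 → ZMod 2)).val.map
          (fun a => (vennRegion S X a).card) =
        (Finset.univ : Finset (Fin 2 → ZMod 2)).val.map
          (fun a => (vennRegion T Y a).card)) ∧
      (vennRegion S X 0).card = (vennRegion T Y 0).card :=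
  stmt_17_general hX.1 hY.1
end

section
/- Let S ⊆ 𝔽₂ⁿ with |S| = k and dim(S) = k − 3, fix a basis X₁, X₂ of E(S), and let a ≤ b ≤ c be the cardinalities of the three Venn regions v_X(10), v_X(01), v_X(11) (the Venn regions other than the isolated point set v_X(0)), listed in nondecreasing order. Then S is a cap if and only if a + b ≥ 6, a + c ≥ 6, and b + c ≥ 6. -/
/-!
Two distinct vectors over `𝔽₂` never sum to zero, so a nonempty even zero-sum set has at least
four elements, and those with exactly four are the obstructions to `S` being a cap. Hence `S` is a
cap iff every nonempty member of `E(S)` has at least six elements.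

Label each point by the vector recording which of the `X i` contain it. The combination of the
`X i` with coefficients `a` contains exactly the points whose label `b` satisfies `a ⬝ᵥ b = 1`, so
its size is the sum of the sizes of the corresponding Venn regions. For `r = 2` every `a ≠ 0`
selects two of the three labels `10`, `01`, `11`, and every such pair arises.
-/

open scoped symmDiff

/-- A subset `S ⊆ 𝔽₂ⁿ` is a cap (Sidon set) if no four distinct elements of `S` sum to
the zero vector. -/
def IsCap {n : ℕ} (S : Finset (Fin n → ZMod 2)) : Prop :=
  ∀ w ∈ S, ∀ x ∈ S, ∀ y ∈ S, ∀ z ∈ S,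
    w ≠ x → w ≠ y → w ≠ z → x ≠ y → x ≠ z → y ≠ z → w + x + y + z ≠ 0

section Cap

theorem sum_ne_zero_of_card_eq_two {V : Type*} [AddCommGroup V] [Module (ZMod 2) V]
    {Y : Finset V} (hY : Y.card = 2) : ∑ x ∈ Y, x ≠ 0 := by
  classical
  obtain ⟨x, y, hxy, rfl⟩ := Finset.card_eq_two.1 hY
  rwa [Finset.sum_pair hxy, ← ZModModule.sub_eq_add, sub_ne_zero]

variable {n : ℕ} {S : Finset (Fin n → ZMod 2)}

theorem isCap_iff_forall_card_eq_four :
    IsCap S ↔ ∀ Y ⊆ S, Y.card = 4 → ∑ x ∈ Y, x ≠ 0 := by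
  constructor
  · intro hS Y hYS hY
    obtain ⟨w, T, hwT, rfl, hT⟩ := Finset.card_eq_succ.1 hY
    obtain ⟨x, y, z, hxy, hxz, hyz, rfl⟩ := Finset.card_eq_three.1 hT
    simp only [Finset.insert_subset_iff, Finset.singleton_subset_iff] at hYS
    obtain ⟨hw, hx, hy, hz⟩ := hYS
    simp only [Finset.mem_insert, Finset.mem_singleton, not_or] at hwT
    obtain ⟨hwx, hwy, hwz⟩ := hwT
    simpa [*, add_assoc] using hS w hw x hx y hy z hz hwx hwy hwz hxy hxz hyz
  · intro hS w hw x hx y hy z hz hwx hwy hwz hxy hxz hyz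
    have hsub : {w, x, y, z} ⊆ S := by
      simp [Finset.insert_subset_iff, *]
    have hcard : ({w, x, y, z} : Finset (Fin n → ZMod 2)).card = 4 := by simp [*]
    simpa [*, add_assoc] using hS _ hsub hcard

theorem isCap_iff_forall_six_le_card :
    IsCap S ↔ ∀ Y ∈ evenZeroSums S, Y ≠ ∅ → 6 ≤ Y.card := by
  rw [isCap_iff_forall_card_eq_four]
  constructor
  · rintro hS Y ⟨hYS, hYeven, hYsum⟩ hYne
    have hpos : Y.card ≠ 0 := Finset.card_ne_zero.2 (Finset.nonempty_iff_ne_empty.2 hYne)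
    have htwo : Y.card ≠ 2 := fun h => sum_ne_zero_of_card_eq_two h hYsum
    have hfour : Y.card ≠ 4 := fun h => hS Y hYS h hYsum
    obtain ⟨m, hm⟩ := hYeven
    omega
  · intro hS Y hYS hY hYsum
    have hYne : Y ≠ ∅ := by
      rintro rfl
      simp at hY
    have hsix := hS Y ⟨hYS, hY ▸ by decide, hYsum⟩ hYne
    omega

end Cap

section Venn

variable {α : Type*} [DecidableEq α] {r : ℕ} {S : Finset α} {X : Fin r → Finset α}
  {a b : Fin r → ZMod 2} {x : α}

/-- The incidence vector of `x` with respect to `X₁, …, X_r`: its `i`-th entry is `1` if `x ∈ X i`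
and `0` otherwise. It is the label of the Venn region that contains `x`. -/
def vennLabel (X : Fin r → Finset α) (x : α) : Fin r → ZMod 2 :=
  fun i => if x ∈ X i then 1 else 0

theorem mem_vennRegion_s18 : x ∈ vennRegion S X b ↔ x ∈ S ∧ vennLabel X x = b := by
  have hcoord (i : Fin r) : (x ∈ X i ↔ b i = 1) ↔ vennLabel X x i = b i := by
    have hbit : b i = 0 ∨ b i = 1 := by
      generalize b i = t
      revert t
      decide
    by_cases hx : x ∈ X i <;> rcases hbit with hb | hb <;> simp [vennLabel, hx, hb]
  simp only [vennRegion, Finset.mem_filter, hcoord, funext_iff]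

theorem ite_mem_fold_symmDiff {ι : Type*} (s : Finset ι) (Y : ι → Finset α) (x : α) :
    (if x ∈ (s.fold (· ∆ ·) ∅ Y : Finset α) then 1 else 0 : ZMod 2) =
      ∑ i ∈ s, if x ∈ Y i then 1 else 0 := by
  classical
  have hsymmDiff (A B : Finset α) : (if x ∈ A ∆ B then 1 else 0 : ZMod 2) =
      (if x ∈ A then 1 else 0) + if x ∈ B then 1 else 0 := by
    by_cases hA : x ∈ A <;> by_cases hB : x ∈ B <;>
      simp [Finset.mem_symmDiff, hA, hB, CharTwo.add_self_eq_zero]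
  induction s using Finset.induction_on with
  | empty => simp
  | insert i s hi ih => rw [Finset.fold_insert hi, hsymmDiff, ih, Finset.sum_insert hi]

theorem mem_zSet_s18 : x ∈ zSet X a ↔ a ⬝ᵥ vennLabel X x = 1 := by
  have hdot : a ⬝ᵥ vennLabel X x = ∑ i with a i = 1, vennLabel X x i := by
    rw [dotProduct, Finset.sum_filter]
    refine Finset.sum_congr rfl fun i _ => ?_
    generalize a i = t, vennLabel X x i = u
    revert t u
    decide
  have hindicator : (if x ∈ zSet X a then 1 else 0 : ZMod 2) = a ⬝ᵥ vennLabel X x :=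
    (ite_mem_fold_symmDiff _ X x).trans hdot.symm
  simp [← hindicator]

theorem zSet_zero : zSet X 0 = ∅ := by
  simp [Finset.ext_iff, mem_zSet_s18]

theorem card_zSet (h : zSet X a ⊆ S) :
    (zSet X a).card = ∑ b with a ⬝ᵥ b = 1, (vennRegion S X b).card := by
  rw [Finset.card_eq_sum_card_fiberwise (f := vennLabel X)
    (t := Finset.univ.filter fun b => a ⬝ᵥ b = 1) fun x hx => by simpa [← mem_zSet_s18] using hx]
  refine Finset.sum_congr rfl fun b hb => congrArg Finset.card ?_
  ext x
  rw [Finset.mem_filter, mem_vennRegion_s18]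
  refine and_congr_left fun hxb => ⟨fun hx => h hx, fun _ => ?_⟩
  rw [mem_zSet_s18, hxb]
  exact (Finset.mem_filter.1 hb).2

end Venn

theorem isCap_iff_of_basis {n r : ℕ} {S : Finset (Fin n → ZMod 2)}
    {X : Fin r → Finset (Fin n → ZMod 2)}
    (hX : Set.range (zSet X) = evenZeroSums S ∧ Function.Injective (zSet X)) :
    IsCap S ↔ ∀ a ≠ 0, 6 ≤ ∑ b with a ⬝ᵥ b = 1, (vennRegion S X b).card := by
  obtain ⟨hrange, hinj⟩ := hX
  have hsub (a) : zSet X a ⊆ S := (hrange ▸ Set.mem_range_self a : _ ∈ evenZeroSums S).1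
  rw [isCap_iff_forall_six_le_card, ← hrange, Set.forall_mem_range]
  simp only [hinj.ne_iff' zSet_zero, card_zSet (hsub _)]

theorem forall_sum_dotProduct_eq_one_fin_two_iff {M : Type*} [AddCommMonoid M]
    (f : (Fin 2 → ZMod 2) → M) (p : M → Prop) :
    (∀ a ≠ 0, p (∑ b with a ⬝ᵥ b = 1, f b)) ↔
      p (f ![1, 0] + f ![0, 1]) ∧ p (f ![1, 0] + f ![1, 1]) ∧ p (f ![0, 1] + f ![1, 1]) := by
  have hne (a : Fin 2 → ZMod 2) : a ≠ 0 ↔ a = ![1, 1] ∨ a = ![1, 0] ∨ a = ![0, 1] := by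
    revert a
    decide
  have h11 : (Finset.univ.filter fun b => ![1, 1] ⬝ᵥ b = (1 : ZMod 2)) = {![1, 0], ![0, 1]} := by
    decide
  have h10 : (Finset.univ.filter fun b => ![1, 0] ⬝ᵥ b = (1 : ZMod 2)) = {![1, 0], ![1, 1]} := by
    decide
  have h01 : (Finset.univ.filter fun b => ![0, 1] ⬝ᵥ b = (1 : ZMod 2)) = {![0, 1], ![1, 1]} := by
    decide
  simp only [hne, forall_eq_or_imp, forall_eq, h11, h10, h01]
  rw [Finset.sum_pair (by decide), Finset.sum_pair (by decide), Finset.sum_pair (by decide)]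

theorem powersetCard_two_triple {α : Type*} (a b c : α) :
    Multiset.powersetCard 2 {a, b, c} = {{a, b}, {a, c}, {b, c}} := by
  simp [← Multiset.cons_zero, Multiset.powersetCard_cons,
    Multiset.powersetCard_one]

/-- Let `S ⊆ 𝔽₂ⁿ` with `|S| = k` and `dim S = k − 3`, fix a basis `X₁, X₂` of `E(S)`,
and let `a ≤ b ≤ c` be the cardinalities of the three Venn regions `v_X(10), v_X(01),
v_X(11)` (those other than the isolated point set `v_X(0)`) listed in nondecreasing
order.  Then `S` is a cap if and only if `a + b ≥ 6`, `a + c ≥ 6`, and `b + c ≥ 6`. -/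
theorem stmt_18 (n k : ℕ) (S : Finset (Fin n → ZMod 2))
    (hSk : S.card = k) (hSd : affDim S = k - 3)
    (X : Fin 2 → Finset (Fin n → ZMod 2))
    (hX : Set.range (zSet X) = evenZeroSums S ∧ Function.Injective (zSet X))
    (a b c : ℕ) (hab : a ≤ b) (hbc : b ≤ c)
    (habc : ({a, b, c} : Multiset ℕ) =
      {(vennRegion S X ![1, 0]).card, (vennRegion S X ![0, 1]).card,
        (vennRegion S X ![1, 1]).card}) :
    IsCap S ↔ (6 ≤ a + b ∧ 6 ≤ a + c ∧ 6 ≤ b + c) := by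
  have hpairs (x y z : ℕ) : (6 ≤ x + y ∧ 6 ≤ x + z ∧ 6 ≤ y + z) ↔
      ∀ t ∈ Multiset.powersetCard 2 {x, y, z}, 6 ≤ t.sum := by
    rw [powersetCard_two_triple]
    simp
  rw [isCap_iff_of_basis hX, forall_sum_dotProduct_eq_one_fin_two_iff, hpairs, ← habc, ← hpairs]
end
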